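/- Let F : ℝ^N → ℝ^N be continuous and suppose |F(y) - y| = o(|y|) as |y| → ∞. Then F is proper (preimages of compact sets are compact) and surjective. -/

import Mathlib

open MeasureTheory Metric Set

theorem aux_det_interp {E : Type*} [NormedAddCommGroup E] [InnerProductSpace ℝ E]
    [FiniteDimensional ℝ E] (t : Fin (Module.finrank ℝ E + 1) → ℝ) (ht : Function.Injective t)
    (A : E →L[ℝ] E) :
    (ContinuousLinearMap.id ℝ E + A).det =
      ∑ i, (Lagrange.basis Finset.univ t i).eval 1 * (ContinuousLinearMap.id ℝ E + t i • A).det := by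
  let b := Module.finBasis ℝ E
  let M := LinearMap.toMatrix b b (A : E →ₗ[ℝ] E)
  let p : Polynomial ℝ := Matrix.det ((Polynomial.X : Polynomial ℝ) • M.map Polynomial.C +
    (1 : Matrix _ _ ℝ).map Polynomial.C)
  have hp : ∀ s : ℝ, p.eval s = (ContinuousLinearMap.id ℝ E + s • A).det := by
    intro s
    have h1 : (ContinuousLinearMap.id ℝ E + s • A).det
        = LinearMap.det (LinearMap.id + s • (A : E →ₗ[ℝ] E)) := rfl
    rw [h1, ← LinearMap.det_toMatrix b, map_add, map_smul, LinearMap.toMatrix_id]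
    simp only [p]
    rw [← Polynomial.coe_evalRingHom, RingHom.map_det]
    congr 1
    ext i j
    by_cases hij : i = j <;> simp [M, hij, add_comm] <;> ring
  have hd : p.degree < (Finset.univ : Finset (Fin (Module.finrank ℝ E + 1))).card := by
    refine lt_of_le_of_lt Polynomial.degree_le_natDegree ?_
    have := Polynomial.natDegree_det_X_add_C_le M 1
    simp only [Fintype.card_fin] at this
    simp only [Finset.card_univ, Fintype.card_fin]
    exact_mod_cast Nat.lt_succ_of_le this
  have h := Lagrange.eq_interpolate (s := Finset.univ) (v := t) ht.injOn hd
  have h1 := hp 1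
  rw [one_smul] at h1
  rw [← h1, h, Lagrange.interpolate_apply, Polynomial.eval_finsetSum]
  refine Finset.sum_congr rfl fun i _ => ?_
  rw [Polynomial.eval_mul, Polynomial.eval_C, hp, mul_comm]

theorem aux_lip {E : Type*} [NormedAddCommGroup E] [InnerProductSpace ℝ E]
    (k : E → E) (R : ℝ) (C : NNReal) (hk : LipschitzOnWith C k (closedBall 0 R))
    (h0 : ∀ y, ‖y‖ = R → k y = 0) :
    LipschitzWith C ((closedBall (0 : E) R).indicator k) := by
  have key : ∀ x y : E, ‖x‖ ≤ R → R < ‖y‖ → ‖k x‖ ≤ C * ‖x - y‖ := by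
    intro x y hx hy
    have hc : ContinuousOn (fun s : ℝ => ‖x + s • (y - x)‖) (Icc 0 1) := by fun_prop
    obtain ⟨s, hs, hsR⟩ := intermediate_value_Icc zero_le_one hc
      (show R ∈ Icc _ _ by constructor <;> simp [hx, hy.le])
    simp only at hsR
    have h1 := hk.norm_sub_le (x := x) (y := x + s • (y - x)) (by simpa using hx)
      (by simp [hsR])
    rw [h0 _ hsR, sub_zero] at h1
    refine h1.trans ?_
    gcongr
    rw [sub_add_cancel_left, norm_neg, norm_smul, Real.norm_of_nonneg hs.1, norm_sub_rev]
    nlinarith [norm_nonneg (x - y), hs.2]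
  refine LipschitzWith.of_dist_le_mul fun x y => ?_
  rw [dist_eq_norm, dist_eq_norm]
  by_cases hx : ‖x‖ ≤ R <;> by_cases hy : ‖y‖ ≤ R
  · rw [indicator_of_mem (by simpa using hx), indicator_of_mem (by simpa using hy)]
    exact hk.norm_sub_le (by simpa using hx) (by simpa using hy)
  · rw [indicator_of_mem (by simpa using hx), indicator_of_notMem (by simpa using hy), sub_zero]
    exact key x y hx (not_le.1 hy)
  · rw [indicator_of_notMem (by simpa using hx), indicator_of_mem (by simpa using hy), zero_sub,
      norm_neg, norm_sub_rev]
    exact key y x hy (not_le.1 hx)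
  · rw [indicator_of_notMem (by simpa using hx), indicator_of_notMem (by simpa using hy)]
    simp only [sub_zero, norm_zero]; positivity

theorem aux_image {E : Type*} [NormedAddCommGroup E] [InnerProductSpace ℝ E]
    [FiniteDimensional ℝ E] (k : E → E) (R : ℝ) (C : NNReal)
    (hk : LipschitzOnWith C k (closedBall 0 R))
    (h0 : ∀ y, ‖y‖ = R → k y = 0) (t : ℝ) (ht0 : 0 ≤ t) (ht : t * C < 1) :
    InjOn (fun y => y + t • k y) (ball 0 R) ∧ (fun y => y + t • k y) '' ball 0 R = ball 0 R := by
  set k' := (closedBall (0 : E) R).indicator k with hk'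
  set g : E → E := fun y => y + t • k' y with hg
  have hL := aux_lip k R C hk h0
  have happ : ApproximatesLinearOn g ((ContinuousLinearEquiv.refl ℝ E : E ≃L[ℝ] E) : E →L[ℝ] E)
      univ (⟨t, ht0⟩ * C) := by
    intro x _ y _
    have h1 := hL.norm_sub_le x y
    have : g x - g y - ((ContinuousLinearEquiv.refl ℝ E : E ≃L[ℝ] E) : E →L[ℝ] E) (x - y)
        = t • (k' x - k' y) := by
      simp [hg, smul_sub]; abel
    rw [this, norm_smul, Real.norm_of_nonneg ht0]
    change _ ≤ t * C * _
    rw [mul_assoc]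
    gcongr
  have hc : Subsingleton E ∨ (⟨t, ht0⟩ * C : NNReal) <
      ‖((ContinuousLinearEquiv.refl ℝ E).symm : E →L[ℝ] E)‖₊⁻¹ := by
    rcases subsingleton_or_nontrivial E with h | h
    · exact Or.inl h
    · right
      have : ‖((ContinuousLinearEquiv.refl ℝ E).symm : E →L[ℝ] E)‖₊ = 1 := by
        ext
        exact ContinuousLinearMap.norm_id
      rw [this, inv_one, ← NNReal.coe_lt_coe]
      exact ht
  have hbij : Function.Bijective g := ⟨injOn_univ.1 (happ.injOn hc), happ.surjective hc⟩
  have heq : EqOn g (fun y => y + t • k y) (ball 0 R) := by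
    intro y hy
    simp only [hg, hk']
    rw [indicator_of_mem (ball_subset_closedBall hy)]
  have hid : EqOn g id (ball 0 R)ᶜ := by
    intro y hy
    simp only [hg, hk', id]
    by_cases h : y ∈ closedBall (0 : E) R
    · rw [indicator_of_mem h, h0 y, smul_zero, add_zero]
      simp at h hy
      exact le_antisymm h hy
    · rw [indicator_of_notMem h, smul_zero, add_zero]
  refine ⟨heq.injOn_iff.1 hbij.1.injOn, ?_⟩
  rw [← heq.image_eq]
  have h2 : g '' (ball 0 R)ᶜ = (ball 0 R)ᶜ := by rw [hid.image_eq, image_id]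
  rw [image_compl_eq hbij] at h2
  exact compl_injective h2

theorem aux_noretract {E : Type*} [NormedAddCommGroup E] [InnerProductSpace ℝ E]
    [FiniteDimensional ℝ E] [MeasurableSpace E] [BorelSpace E]
    (f : E → E) (hf : ContDiff ℝ 1 f) (R : ℝ) (hR : 0 < R)
    (hn : ∀ y, ‖f y‖ = R) (hid : ∀ y, ‖y‖ = R → f y = y) : False := by
  set k : E → E := fun y => f y - y with hk
  have hkd : ContDiff ℝ 1 k := hf.sub contDiff_id
  have hkD : Differentiable ℝ k := hkd.differentiable (by norm_num)
  have hk' : Continuous (fderiv ℝ k) := hkd.continuous_fderiv (by norm_num)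
  have h0 : ∀ y, ‖y‖ = R → k y = 0 := fun y hy => by simp [hk, hid y hy]
  obtain ⟨C, hC⟩ := (isCompact_closedBall (0 : E) R).exists_bound_of_continuousOn hk'.continuousOn
  have hC0 : 0 ≤ C := (norm_nonneg _).trans (hC 0 (by simp [hR.le]))
  lift C to NNReal using hC0
  have hlip : LipschitzOnWith C k (closedBall 0 R) :=
    (convex_closedBall (0 : E) R).lipschitzOnWith_of_nnnorm_fderiv_le (fun x _ => hkD x) hC
  -- positivity of the determinant near the identity
  have hdc : Continuous (fun A : E →L[ℝ] E => A.det) := ContinuousLinearMap.continuous_det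
  obtain ⟨δ, hδ, hδp⟩ := Metric.eventually_nhds_iff.1
    (hdc.continuousAt.eventually (lt_mem_nhds
      (show (0 : ℝ) < (ContinuousLinearMap.id ℝ E).det by
        have : (ContinuousLinearMap.id ℝ E).det = 1 := LinearMap.det_id
        rw [this]; exact one_pos)))
  obtain ⟨τ, hτ0, hτ1, hτδ⟩ : ∃ τ : ℝ, 0 < τ ∧ τ * C < 1 ∧ τ * C < δ := by
    refine ⟨min 1 δ / (C + 1), by positivity, ?_, ?_⟩
    · have : min 1 δ / (C + 1) * C < min 1 δ := by
        rw [div_mul_eq_mul_div, div_lt_iff₀ (by positivity)]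
        have : 0 < min 1 δ := by positivity
        nlinarith
      exact this.trans_le (min_le_left _ _)
    · have : min 1 δ / (C + 1) * C < min 1 δ := by
        rw [div_mul_eq_mul_div, div_lt_iff₀ (by positivity)]
        have : 0 < min 1 δ := by positivity
        nlinarith
      exact this.trans_le (min_le_right _ _)
  have hcont : ∀ t : ℝ, Continuous
      (fun y => (ContinuousLinearMap.id ℝ E + t • fderiv ℝ k y).det) := fun t =>
    hdc.comp (continuous_const.add (hk'.const_smul t))
  have hintg : ∀ t : ℝ, IntegrableOn
      (fun y => (ContinuousLinearMap.id ℝ E + t • fderiv ℝ k y).det) (ball 0 R) volume := fun t =>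
    ((hcont t).continuousOn.integrableOn_compact (isCompact_closedBall (0 : E) R)).mono_set
      ball_subset_closedBall
  have hvol : ∀ t : ℝ, 0 ≤ t → t ≤ τ →
      ∫ y in ball (0 : E) R, (ContinuousLinearMap.id ℝ E + t • fderiv ℝ k y).det
        = volume.real (ball (0 : E) R) := by
    intro t ht0 htτ
    have htC : t * C ≤ τ * C := by gcongr
    obtain ⟨hinj, himg⟩ := aux_image k R C hlip h0 t ht0 (htC.trans_lt hτ1)
    have hder : ∀ y ∈ ball (0 : E) R, HasFDerivWithinAt (fun y => y + t • k y)
        (ContinuousLinearMap.id ℝ E + t • fderiv ℝ k y) (ball 0 R) y := fun y _ =>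
      ((hasFDerivAt_id y).add ((hkD y).hasFDerivAt.const_smul t)).hasFDerivWithinAt
    have h := integral_image_eq_integral_abs_det_fderiv_smul volume measurableSet_ball hder hinj
      (fun _ => (1 : ℝ))
    rw [himg] at h
    simp only [smul_eq_mul, mul_one, integral_const, MeasurableSet.univ, measureReal_restrict_apply,
      univ_inter] at h
    rw [h]
    refine setIntegral_congr_fun measurableSet_ball fun y hy => ?_
    refine (abs_of_pos (hδp ?_)).symm
    rw [dist_eq_norm, add_sub_cancel_left, norm_smul, Real.norm_of_nonneg ht0]
    have := hC y (ball_subset_closedBall hy)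
    calc t * ‖fderiv ℝ k y‖ ≤ t * C := by gcongr
      _ < δ := htC.trans_lt hτδ
  -- the determinant of the derivative of `f` vanishes
  have hdet0 : ∀ y, (ContinuousLinearMap.id ℝ E + fderiv ℝ k y).det = 0 := by
    intro y
    have hfd : HasFDerivAt f (ContinuousLinearMap.id ℝ E + fderiv ℝ k y) y := by
      have := (hasFDerivAt_id y).add (hkD y).hasFDerivAt
      convert this using 1
      ext z; simp [hk]
    by_contra hne
    set A := ContinuousLinearMap.id ℝ E + fderiv ℝ k y
    have hsurj : Function.Surjective (A : E →ₗ[ℝ] E) :=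
      (LinearMap.equivOfDetNeZero (A : E →ₗ[ℝ] E) hne).surjective
    obtain ⟨v, hv⟩ := hsurj (f y)
    have hv' : A v = f y := hv
    have h1 := hfd.norm_sq
    have h2 : HasFDerivAt (fun z => ‖f z‖ ^ 2) (0 : E →L[ℝ] ℝ) y := by
      simp only [hn]; exact hasFDerivAt_const _ _
    have h3 := congrArg (fun L : E →L[ℝ] ℝ => L v) (h1.unique h2)
    simp [hv', hn] at h3
    exact hR.ne' h3
  let t : Fin (Module.finrank ℝ E + 1) → ℝ := fun i => τ / ((i : ℕ) + 1)
  have ht : Function.Injective t := by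
    intro i j hij
    simp only [t] at hij
    have hi : ((i : ℕ) : ℝ) + 1 ≠ 0 := by positivity
    have hj : ((j : ℕ) : ℝ) + 1 ≠ 0 := by positivity
    rw [div_eq_div_iff hi hj] at hij
    have := mul_left_cancel₀ hτ0.ne' hij
    ext
    exact_mod_cast (add_right_cancel this).symm
  have ht0 : ∀ i, 0 ≤ t i := fun i => by positivity
  have htτ : ∀ i, t i ≤ τ := fun i => div_le_self hτ0.le (by simp)
  have hsum : ∑ i, (Lagrange.basis Finset.univ t i).eval 1 = 1 := by
    have := congrArg (Polynomial.eval 1)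
      (Lagrange.sum_basis (s := Finset.univ) (v := t) ht.injOn Finset.univ_nonempty)
    rwa [Polynomial.eval_finsetSum, Polynomial.eval_one] at this
  have hfinal : ∫ y in ball (0 : E) R, (ContinuousLinearMap.id ℝ E + fderiv ℝ k y).det
      = volume.real (ball (0 : E) R) := by
    rw [integral_congr_ae (Filter.Eventually.of_forall fun y => aux_det_interp t ht (fderiv ℝ k y))]
    rw [integral_finsetSum _ fun i _ => (hintg (t i)).const_mul _]
    simp_rw [integral_const_mul, hvol _ (ht0 _) (htτ _)]
    rw [← Finset.sum_mul, hsum, one_mul]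
  simp only [hdet0, integral_zero] at hfinal
  have : 0 < volume.real (ball (0 : E) R) :=
    ENNReal.toReal_pos (measure_ball_pos _ _ hR).ne' measure_ball_lt_top.ne
  exact this.ne hfinal

theorem aux_zero {E : Type*} [NormedAddCommGroup E] [InnerProductSpace ℝ E]
    [FiniteDimensional ℝ E] [MeasurableSpace E] [BorelSpace E]
    (G : E → E) (hG : Continuous G) (r : ℝ) (hr : 4 ≤ r)
    (hclose : ∀ y, r ≤ ‖y‖ → ‖G y - y‖ ≤ ‖y‖ / 2) : ∃ y, G y = 0 := by
  by_contra! hne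
  obtain ⟨S, hS, hSG, -⟩ := hG.exists_contDiff_approx 1 (ε := fun y => min ‖G y‖ 1)
    (by fun_prop) (fun y => lt_min (norm_pos_iff.2 (hne y)) one_pos)
  let b : ContDiffBump (0 : E) := ⟨r, r + 1, by linarith, by linarith⟩
  let H : E → E := fun y => y + b y • (S y - y)
  have hH : ContDiff ℝ 1 H := contDiff_id.add (b.contDiff.smul (hS.sub contDiff_id))
  have hHne : ∀ y, H y ≠ 0 := by
    intro y hy
    have h1 := hSG y
    rw [dist_eq_norm] at h1
    rcases le_total r ‖y‖ with h | h
    · have h2 : ‖S y - y‖ < ‖y‖ := by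
        have : S y - y = (S y - G y) + (G y - y) := by abel
        rw [this]
        have h3 := norm_add_le (S y - G y) (G y - y)
        have := hclose y h
        have := h1.trans_le (min_le_right _ _)
        linarith
      have h3 : y = - (b y • (S y - y)) := eq_neg_of_add_eq_zero_left hy
      have h4 : ‖y‖ = b y * ‖S y - y‖ := by
        conv_lhs => rw [h3]
        rw [norm_neg, norm_smul, Real.norm_of_nonneg b.nonneg]
      have : b y ≤ 1 := b.le_one
      nlinarith [norm_nonneg (S y - y)]
    · have hb : b y = 1 := b.one_of_mem_closedBall (by simpa [b] using h)
      simp only [H, hb, one_smul, add_sub_cancel] at hy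
      rw [hy, zero_sub, norm_neg] at h1
      exact (h1.trans_le (min_le_left _ _)).false
  refine aux_noretract (fun y => ((r + 1) * ‖H y‖⁻¹) • H y) ?_ (r + 1) (by linarith) ?_ ?_
  · exact (contDiff_const.mul ((hH.norm ℝ hHne).inv fun y => norm_ne_zero_iff.2 (hHne y))).smul hH
  · intro y
    have := norm_ne_zero_iff.2 (hHne y)
    rw [norm_smul, norm_mul, norm_inv, norm_norm, mul_assoc, inv_mul_cancel₀ this, mul_one,
      Real.norm_of_nonneg (by linarith)]
  · intro y hy
    have hb : b y = 0 := b.zero_of_le_dist (by simp [b, hy])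
    have : H y = y := by simp [H, hb]
    simp only [this, hy]
    rw [mul_inv_cancel₀ (by linarith), one_smul]

theorem stmt8 {N : ℕ} (F : EuclideanSpace ℝ (Fin N) → EuclideanSpace ℝ (Fin N))
    (hF : Continuous F)
    (ho : Filter.Tendsto (fun y => ‖F y - y‖ / ‖y‖)
      (Filter.cocompact (EuclideanSpace ℝ (Fin N))) (nhds 0)) :
    (∀ K : Set (EuclideanSpace ℝ (Fin N)), IsCompact K → IsCompact (F ⁻¹' K)) ∧
      Function.Surjective F := by
  obtain ⟨r, hr⟩ : ∃ r : ℝ, ∀ y, r < ‖y‖ → ‖F y - y‖ ≤ ‖y‖ / 4 := by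
    have h := ho.eventually (gt_mem_nhds (show (0 : ℝ) < 1 / 4 by norm_num))
    rw [← cobounded_eq_cocompact] at h
    obtain ⟨r, -, hr⟩ := (Filter.hasBasis_cobounded_norm.eventually_iff).1 h
    refine ⟨max r 0, fun y hy => ?_⟩
    have h1 := hr (show r ≤ ‖y‖ from (le_max_left _ _).trans hy.le)
    have h2 : 0 < ‖y‖ := (le_max_right _ _).trans_lt hy
    rw [div_lt_iff₀ h2] at h1
    linarith
  constructor
  · intro K hK
    obtain ⟨M, hM⟩ := hK.isBounded.exists_norm_le
    refine Metric.isCompact_of_isClosed_isBounded (hK.isClosed.preimage hF) ?_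
    refine isBounded_iff_forall_norm_le.2 ⟨max r (2 * M), fun y hy => ?_⟩
    by_contra! hlt
    have h1 := hr y ((le_max_left _ _).trans_lt hlt)
    have h2 := (le_max_right r (2 * M)).trans_lt hlt
    have h3 := hM _ hy
    have h4 := norm_sub_norm_le y (F y)
    rw [norm_sub_rev] at h4
    have := norm_nonneg (F y)
    linarith
  · intro x
    obtain ⟨y, hy⟩ := aux_zero (fun y => F y - x) (hF.sub continuous_const)
      (max (max (r + 1) 4) (4 * ‖x‖)) ((le_max_right _ _).trans (le_max_left _ _)) (by
        intro y hy
        have h1 : r + 1 ≤ ‖y‖ := ((le_max_left _ _).trans (le_max_left _ _)).trans hy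
        have h2 : 4 * ‖x‖ ≤ ‖y‖ := (le_max_right _ _).trans hy
        have h3 := hr y (by linarith)
        have h4 : F y - x - y = (F y - y) - x := by abel
        rw [h4]
        have := norm_sub_le (F y - y) x
        linarith)
    exact ⟨y, sub_eq_zero.1 hy⟩
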